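/- arXiv:1904.07007 — 2 statements merged into one kernel-verified Lean document; each statement's English description precedes it below -/
import Mathlib

section
/- Let β ∈ (1,2) with δ(β) = (1^m 0)^∞ for some m ≥ 1. Then [0, 1 − 1/β) \ ⋃ [t_L, t_R) ⊆ E_β, where the union is over all β-Lyndon intervals; i.e., every t ∈ [0, 1 − 1/β) lying in no β-Lyndon interval belongs to E_β. -/
open Set Filter MeasureTheory

/-- The β-transformation `x ↦ βx (mod 1)`. -/
noncomputable def Tbeta (β x : ℝ) : ℝ := Int.fract (β * x)

/-- The survivor set `K_β(t) = {x ∈ [0,1) : T_β^n x ≥ t for all n ≥ 0}`. -/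
def Kset (β t : ℝ) : Set ℝ := {x | x ∈ Set.Ico (0 : ℝ) 1 ∧ ∀ n : ℕ, t ≤ (Tbeta β)^[n] x}

/-- Strict lexicographic order on sequences of naturals. -/
def seqLt (x y : ℕ → ℕ) : Prop := ∃ n, (∀ i, i < n → x i = y i) ∧ x n < y n

/-- Lexicographic order on sequences of naturals. -/
def seqLe (x y : ℕ → ℕ) : Prop := x = y ∨ seqLt x y

/-- The `n`-th iterate of the left shift. -/
def shiftN (n : ℕ) (x : ℕ → ℕ) : ℕ → ℕ := fun i => x (i + n)

/-- The sequence `w 0^∞`. -/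
def wordSeq (w : List ℕ) : ℕ → ℕ := fun i => w.getD i 0

/-- The periodic sequence `w^∞`. -/
def perSeq (w : List ℕ) : ℕ → ℕ := fun i => w.getD (i % w.length) 0

/-- The sequence obtained by concatenating the word `w` with the sequence `x`. -/
def catSeq (w : List ℕ) (x : ℕ → ℕ) : ℕ → ℕ :=
  fun i => if i < w.length then w.getD i 0 else x (i - w.length)

/-- The greedy β-expansion of `t`: the digit `b_{i+1}` is `⌊β T_β^i t⌋`. -/
noncomputable def greedy (β t : ℝ) : ℕ → ℕ := fun i => (⌊β * (Tbeta β)^[i] t⌋).toNat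

/-- `d` is the quasi-greedy β-expansion of `1`: the lexicographically largest
sequence in `{0,1}^ℕ` not ending in `0^∞` whose digits sum to `1` in base `β`. -/
def IsQuasiGreedy (β : ℝ) (d : ℕ → ℕ) : Prop :=
  (∀ i, d i ≤ 1) ∧ (¬ ∃ N, ∀ n, N ≤ n → d n = 0) ∧
  (∑' i : ℕ, (d i : ℝ) / β ^ (i + 1) = 1) ∧
  ∀ e : ℕ → ℕ, (∀ i, e i ≤ 1) → (¬ ∃ N, ∀ n, N ≤ n → e n = 0) →
    (∑' i : ℕ, (e i : ℝ) / β ^ (i + 1) = 1) → seqLe e d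

/-- `s = s_1…s_p` is a β-Lyndon word: `s_{i+1}…s_p ≻ s_1…s_{p-i}` for `1 ≤ i < p`
and `σ^n(s^∞) ≺ δ(β)` for all `n ≥ 0`. -/
def IsBetaLyndon (β : ℝ) (s : List ℕ) : Prop :=
  s ≠ [] ∧ (∀ a ∈ s, a ≤ 1) ∧
  (∀ i, 1 ≤ i → i < s.length →
    seqLt (wordSeq (s.take (s.length - i))) (wordSeq (s.drop i))) ∧
  (∀ d : ℕ → ℕ, IsQuasiGreedy β d → ∀ n : ℕ, seqLt (shiftN n (perSeq s)) d)

/-- Left endpoint `t_L = Σ_{i=1}^p s_i β^{-i}` of the β-Lyndon interval generated by `s`. -/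
noncomputable def lyndonLeft (β : ℝ) (s : List ℕ) : ℝ :=
  ∑ i ∈ Finset.range s.length, (s.getD i 0 : ℝ) / β ^ (i + 1)

/-- Right endpoint `t_R = (β^p/(β^p - 1)) t_L` of the β-Lyndon interval generated by `s`. -/
noncomputable def lyndonRight (β : ℝ) (s : List ℕ) : ℝ :=
  β ^ s.length / (β ^ s.length - 1) * lyndonLeft β s

/-- The union of all β-Lyndon intervals `[t_L, t_R)`. -/
noncomputable def lyndonUnionIco (β : ℝ) : Set ℝ :=
  ⋃ s ∈ {s : List ℕ | IsBetaLyndon β s}, Set.Ico (lyndonLeft β s) (lyndonRight β s)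

/-- The symbolic survivor set `K̃_β(t)` with upper bound sequence `d = δ(β)`. -/
def Ktilde (β t : ℝ) (d : ℕ → ℕ) : Set (ℕ → ℕ) :=
  {x | (∀ i, x i ≤ 1) ∧ ∀ n : ℕ, seqLe (greedy β t) (shiftN n x) ∧ seqLe (shiftN n x) d}

/-- The set-valued bifurcation set `E_β`. -/
def Eset (β : ℝ) : Set ℝ :=
  {t | t ∈ Set.Ico (0 : ℝ) 1 ∧ ∀ t', t < t' → t' < 1 → Kset β t' ≠ Kset β t}

/-- The dimension bifurcation set `B_β`. -/
def Bset (β : ℝ) : Set ℝ :=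
  {t | t ∈ Set.Ico (0 : ℝ) 1 ∧ ∀ t', t < t' → t' < 1 → dimH (Kset β t') ≠ dimH (Kset β t)}

/-- `β` is a multinacci number: `β^{m+1} = β^m + ⋯ + β + 1` for some `m ≥ 1`. -/
def IsMultinacci (β : ℝ) : Prop :=
  ∃ m : ℕ, 1 ≤ m ∧ β ^ (m + 1) = ∑ i ∈ Finset.range (m + 1), β ^ i

/-!
If `t` did not survive its own hole, let `n` be the first time with `T_β^n t < t`, and let `s` be the
word of the first `n` greedy digits of `t`. Minimality of `n` makes `s` Lyndon, and
`t = s_L + T_β^n t / β^n` with `0 ≤ T_β^n t < t` puts `t` into `[s_L, s_R)`. So it remains to see that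
every shift of `s^∞` is below `(1^m 0)^∞`. Since `β^{-1} + ⋯ + β^{-(m+1)} = 1`, the greedy digits
of a number below `1` never contain `1^{m+1}`, and, as `s` starts with `0`, neither does `s^∞`; this
gives `≼`. Equality would force `s^∞ = (0 1^m)^∞`, but `t < 1 - 1/β` rules out that `t` starts with
`0 1^m`.
-/

section Lexicographic

variable {x y : ℕ → ℕ} {m n : ℕ}

lemma seqLt_iff_toLex_lt : seqLt x y ↔ toLex x < toLex y := Iff.rfl

lemma seqLe_iff_toLex_le : seqLe x y ↔ toLex x ≤ toLex y := by
  rw [le_iff_eq_or_lt, toLex_inj]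
  exact or_congr_right seqLt_iff_toLex_lt

lemma wordSeq_take {w : List ℕ} {k j : ℕ} (hj : j < k) : wordSeq (w.take k) j = wordSeq w j := by
  simp [wordSeq, List.getD, hj]

lemma wordSeq_drop (w : List ℕ) (k : ℕ) : wordSeq (w.drop k) = shiftN k (wordSeq w) := by
  funext j
  simp [wordSeq, shiftN, List.getD, List.getElem?_drop, add_comm]

/-- The word `x_0 … x_{n-1}` of the first `n` digits of `x`. -/
def seqPrefix (x : ℕ → ℕ) (n : ℕ) : List ℕ := (List.range n).map x

@[simp]
lemma length_seqPrefix (x : ℕ → ℕ) (n : ℕ) : (seqPrefix x n).length = n := by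
  simp [seqPrefix]

lemma getD_seqPrefix {i : ℕ} (hi : i < n) : (seqPrefix x n).getD i 0 = x i := by
  simp [seqPrefix, List.getD, hi]

lemma perSeq_seqPrefix (hn : 0 < n) (i : ℕ) : perSeq (seqPrefix x n) i = x (i % n) := by
  rw [perSeq, length_seqPrefix, getD_seqPrefix (Nat.mod_lt _ hn)]

lemma periodic_perSeq (w : List ℕ) : Function.Periodic (perSeq w) w.length := fun i => by
  rw [perSeq, perSeq, Nat.add_mod_right]

/-- `x` has at most `m` consecutive nonzero digits; for a sequence in `{0,1}^ℕ`, the word `1^{m+1}`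
does not occur in `x`. -/
def RunsLE (m : ℕ) (x : ℕ → ℕ) : Prop := ∀ k, ∃ i ≤ m, shiftN k x i = 0

lemma RunsLE.shift (h : RunsLE m x) (k : ℕ) : RunsLE m (shiftN k x) := fun l => by
  simpa only [shiftN, add_assoc] using h (l + k)

lemma RunsLE.perSeq_prefix (h : RunsLE m x) (h0 : x 0 = 0) (hn : 0 < n) :
    RunsLE m (perSeq (seqPrefix x n)) := by
  intro k
  have hkn : k % n < n := Nat.mod_lt k hn
  obtain ⟨i, him, hi⟩ := h (k % n)
  rcases lt_or_ge (i + k % n) n with hlt | hge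
  · refine ⟨i, him, ?_⟩
    rwa [shiftN, perSeq_seqPrefix hn, ← Nat.add_mod_mod, Nat.mod_eq_of_lt hlt]
  · refine ⟨n - k % n, by omega, ?_⟩
    rw [shiftN, perSeq_seqPrefix hn, ← Nat.add_mod_mod, Nat.sub_add_cancel hkn.le,
      Nat.mod_self, h0]

/-- The sequence `(1^m 0)^∞`, the quasi-greedy expansion of `1` in a multinacci base. -/
abbrev onesZero (m : ℕ) : ℕ → ℕ := perSeq (List.replicate m 1 ++ [0])

lemma onesZero_apply (m i : ℕ) : onesZero m i = if m + 1 ∣ i + 1 then 0 else 1 := by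
  have hlt : i % (m + 1) < m + 1 := Nat.mod_lt _ m.succ_pos
  have hdvd : m + 1 ∣ i + 1 ↔ i % (m + 1) = m := by
    rw [← Nat.succ_mod_succ_eq_zero_iff, Nat.dvd_iff_mod_eq_zero]
  simp only [onesZero, perSeq, List.length_append, List.length_replicate, List.length_singleton,
    hdvd]
  split_ifs with h
  · simp [List.getD, h]
  · simp [List.getD, List.getElem?_append, show i % (m + 1) < m by omega]

lemma periodic_onesZero (m : ℕ) : Function.Periodic (onesZero m) (m + 1) := fun i => by
  simp only [onesZero_apply, add_right_comm i (m + 1) 1, Nat.dvd_add_self_right]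

lemma onesZero_eq_zero_iff {i : ℕ} : onesZero m i = 0 ↔ m + 1 ∣ i + 1 := by
  simp [onesZero_apply]

lemma add_lt_of_onesZero_eq_zero {i j : ℕ} (hi : onesZero m i = 0) (hj : onesZero m j = 0)
    (hij : i < j) : i + m < j := by
  rw [onesZero_eq_zero_iff] at hi hj
  have := Nat.le_of_dvd (by omega) (Nat.dvd_sub hj hi)
  omega

lemma RunsLE.seqLe_onesZero (h : RunsLE m x) (hx : ∀ i, x i ≤ 1) : seqLe x (onesZero m) := by
  refine seqLe_iff_toLex_le.2 (not_lt.1 fun hgt => ?_)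
  obtain ⟨n, heq, hlt⟩ := seqLt_iff_toLex_lt.2 hgt
  have hn : onesZero m n = 0 := by have := hx n; omega
  have hmn : m ≤ n := by
    have := Nat.le_of_dvd n.succ_pos (onesZero_eq_zero_iff.1 hn)
    omega
  obtain ⟨i, him, hi⟩ := h (n - m)
  rw [shiftN] at hi
  have hne : i + (n - m) ≠ n := fun hc => by rw [hc] at hi; omega
  have hi' : onesZero m (i + (n - m)) = 0 := (heq _ (by omega)).trans hi
  have := add_lt_of_onesZero_eq_zero hi' hn (by omega)
  omega

lemma RunsLE.seqLt_onesZero_of_periodic (h : RunsLE m x) (hx : ∀ i, x i ≤ 1)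
    (hper : Function.Periodic x n) (hn : 0 < n) (h0 : x 0 = 0) (hzero : ∃ i < m, x (i + 1) = 0)
    (k : ℕ) : seqLt (shiftN k x) (onesZero m) := by
  refine ((h.shift k).seqLe_onesZero fun i => hx _).resolve_left fun heq => ?_
  obtain ⟨i, him, hi⟩ := hzero
  obtain ⟨j, hj⟩ := Nat.exists_eq_add_of_le' (Nat.le_mul_of_pos_left k hn)
  have hshift : ∀ l, onesZero m (l + j) = x l := fun l => by
    rw [← heq, shiftN, add_assoc, ← hj, mul_comm]
    exact hper.nat_mul k l
  have hj0 : onesZero m j = 0 := by simpa only [zero_add, h0] using hshift 0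
  have := add_lt_of_onesZero_eq_zero hj0 ((hshift (i + 1)).trans hi) (by omega)
  omega

end Lexicographic

section Expansions

variable {β : ℝ} {a : ℕ → ℕ} {m p : ℕ}

lemma tsum_div_pow_of_periodic (ha : Function.Periodic a p)
    (hs : Summable fun i => (a i : ℝ) / β ^ (i + 1)) :
    ∑' i, (a i : ℝ) / β ^ (i + 1) = ∑ i ∈ Finset.range p, (a i : ℝ) / β ^ (i + 1) +
      (∑' i, (a i : ℝ) / β ^ (i + 1)) / β ^ p := by
  conv_lhs => rw [← hs.sum_add_tsum_nat_add p]
  rw [← tsum_div_const]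
  congr 2 with i
  rw [ha i, div_div, ← pow_add, add_right_comm]

lemma sum_one_div_pow_eq_one_of_tsum_onesZero
    (h : ∑' i, (onesZero m i : ℝ) / β ^ (i + 1) = 1) :
    ∑ i ∈ Finset.range (m + 1), 1 / β ^ (i + 1) = 1 := by
  have hs : Summable fun i => (onesZero m i : ℝ) / β ^ (i + 1) := by
    by_contra hns
    exact zero_ne_one ((tsum_eq_zero_of_not_summable hns).symm.trans h)
  have hones : ∀ i ∈ Finset.range m, (onesZero m i : ℝ) / β ^ (i + 1) = 1 / β ^ (i + 1) := by
    intro i hi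
    have hndvd : ¬ m + 1 ∣ i + 1 := Nat.not_dvd_of_pos_of_lt i.succ_pos (by simpa using hi)
    rw [onesZero_apply, if_neg hndvd, Nat.cast_one]
  have hsum := tsum_div_pow_of_periodic (periodic_onesZero m) hs
  rw [h, Finset.sum_range_succ, Finset.sum_congr rfl hones, onesZero_eq_zero_iff.2 dvd_rfl,
    Nat.cast_zero, zero_div, add_zero] at hsum
  rw [Finset.sum_range_succ, ← hsum]

lemma sum_range_one_div_pow_eq_sub_one (hβ : β ≠ 0)
    (h : ∑ i ∈ Finset.range (m + 1), 1 / β ^ (i + 1) = 1) :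
    ∑ i ∈ Finset.range m, 1 / β ^ (i + 1) = β - 1 := by
  have hscale : β * ∑ i ∈ Finset.range (m + 1), 1 / β ^ (i + 1) =
      ∑ i ∈ Finset.range m, 1 / β ^ (i + 1) + 1 := by
    rw [Finset.sum_range_succ', mul_add, Finset.mul_sum]
    congr 1
    · refine Finset.sum_congr rfl fun i _ => ?_
      rw [pow_succ' β (i + 1), mul_one_div, div_mul_cancel_left₀ hβ, one_div]
    · rw [zero_add, pow_one, mul_one_div_cancel hβ]
  rw [h, mul_one] at hscale
  exact eq_sub_of_add_eq hscale.symm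

end Expansions

section Greedy

variable {β x y : ℝ} {n : ℕ}

lemma iterate_Tbeta_nonneg (hx : 0 ≤ x) : ∀ n, 0 ≤ (Tbeta β)^[n] x
  | 0 => hx
  | n + 1 => by rw [Function.iterate_succ_apply']; exact Int.fract_nonneg _

lemma iterate_Tbeta_lt_one (hx : x < 1) : ∀ n, (Tbeta β)^[n] x < 1
  | 0 => hx
  | n + 1 => by rw [Function.iterate_succ_apply']; exact Int.fract_lt_one _

lemma greedy_iterate (β x : ℝ) (k : ℕ) :
    greedy β ((Tbeta β)^[k] x) = shiftN k (greedy β x) := by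
  funext i
  simp only [greedy, shiftN, Function.iterate_add_apply]

lemma greedy_zero_add_Tbeta (hβ : 0 ≤ β) (hx : 0 ≤ x) :
    (greedy β x 0 : ℝ) + Tbeta β x = β * x := by
  have hfloor : ((⌊β * x⌋.toNat : ℕ) : ℝ) = (⌊β * x⌋ : ℝ) := by
    exact_mod_cast Int.toNat_of_nonneg (Int.floor_nonneg.2 (mul_nonneg hβ hx))
  rw [greedy, Function.iterate_zero_apply, hfloor, Tbeta, Int.floor_add_fract]

lemma greedy_le_one (hβ : 0 < β) (hβ2 : β ≤ 2) (hx : x < 1) (n : ℕ) :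
    greedy β x n ≤ 1 := by
  have hlt : β * (Tbeta β)^[n] x < 2 :=
    ((mul_lt_iff_lt_one_right hβ).2 (iterate_Tbeta_lt_one hx n)).trans_le hβ2
  have hfloor : ⌊β * (Tbeta β)^[n] x⌋ < 2 := Int.floor_lt.2 (by exact_mod_cast hlt)
  rw [greedy]
  omega

lemma eq_sum_greedy_add (hβ : 0 < β) (hx : 0 ≤ x) (n : ℕ) :
    x = ∑ i ∈ Finset.range n, (greedy β x i : ℝ) / β ^ (i + 1) + (Tbeta β)^[n] x / β ^ n := by
  induction n with
  | zero => simp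
  | succ n ih =>
    have hdigit := greedy_zero_add_Tbeta hβ.le (iterate_Tbeta_nonneg (β := β) hx n)
    rw [greedy_iterate, shiftN, zero_add, ← Function.iterate_succ_apply' (Tbeta β)] at hdigit
    have hsplit : (Tbeta β)^[n] x / β ^ n =
        greedy β x n / β ^ (n + 1) + (Tbeta β)^[n + 1] x / β ^ (n + 1) := by
      rw [← add_div, hdigit, pow_succ', mul_div_mul_left _ _ hβ.ne']
    rw [Finset.sum_range_succ, add_assoc, ← hsplit, ← ih]

lemma exists_greedy_eq_zero (hβ : 0 < β) (hx : 0 ≤ x)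
    (h : x < ∑ i ∈ Finset.range n, 1 / β ^ (i + 1)) : ∃ i < n, greedy β x i = 0 := by
  contrapose! h
  calc ∑ i ∈ Finset.range n, 1 / β ^ (i + 1)
      ≤ ∑ i ∈ Finset.range n, (greedy β x i : ℝ) / β ^ (i + 1) := by
        refine Finset.sum_le_sum fun i hi => ?_
        gcongr
        exact_mod_cast Nat.one_le_iff_ne_zero.2 (h i (Finset.mem_range.1 hi))
    _ ≤ ∑ i ∈ Finset.range n, (greedy β x i : ℝ) / β ^ (i + 1) + (Tbeta β)^[n] x / β ^ n :=
        le_add_of_nonneg_right (div_nonneg (iterate_Tbeta_nonneg hx n) (pow_pos hβ n).le)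
    _ = x := (eq_sum_greedy_add hβ hx n).symm

lemma exists_greedy_lt_of_iterate_lt (hβ : 0 ≤ β) (hx : 0 ≤ x) (hxy : x ≤ y)
    (h : (Tbeta β)^[n] y < (Tbeta β)^[n] x) :
    ∃ j < n, (∀ i < j, greedy β x i = greedy β y i) ∧ greedy β x j < greedy β y j := by
  induction n generalizing x y with
  | zero => exact absurd h hxy.not_gt
  | succ n ih =>
    have hle : greedy β x 0 ≤ greedy β y 0 :=
      Int.toNat_le_toNat (Int.floor_le_floor (mul_le_mul_of_nonneg_left hxy hβ))
    rcases hle.lt_or_eq with hlt | heq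
    · exact ⟨0, n.succ_pos, fun i hi => absurd hi i.not_lt_zero, hlt⟩
    · have hT : Tbeta β x ≤ Tbeta β y := by
        have hdigx := greedy_zero_add_Tbeta hβ hx
        have hdigy := greedy_zero_add_Tbeta hβ (hx.trans hxy)
        rw [heq] at hdigx
        linarith [mul_le_mul_of_nonneg_left hxy hβ]
      obtain ⟨j, hjn, hpre, hj⟩ := ih (Int.fract_nonneg _) hT h
      refine ⟨j + 1, Nat.succ_lt_succ hjn, fun i hi => ?_, hj⟩
      cases i with
      | zero => exact heq
      | succ i => exact hpre i (Nat.lt_of_succ_lt_succ hi)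

end Greedy

section FirstDrop

variable {β t : ℝ} {m n : ℕ}

lemma seqLt_take_drop_of_first_drop (hβ : 0 ≤ β) (ht : 0 ≤ t) (hn : (Tbeta β)^[n] t < t)
    (hmin : ∀ k < n, t ≤ (Tbeta β)^[k] t) {i : ℕ} (hi : 1 ≤ i) (hin : i < n) :
    seqLt (wordSeq ((seqPrefix (greedy β t) n).take (n - i)))
      (wordSeq ((seqPrefix (greedy β t) n).drop i)) := by
  have hdrop : (Tbeta β)^[n - i] ((Tbeta β)^[i] t) < (Tbeta β)^[n - i] t := by
    rw [← Function.iterate_add_apply, Nat.sub_add_cancel hin.le]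
    exact hn.trans_le (hmin _ (by omega))
  obtain ⟨j, hjn, hpre, hj⟩ := exists_greedy_lt_of_iterate_lt hβ ht (hmin i hin) hdrop
  have htake : ∀ l < n - i,
      wordSeq ((seqPrefix (greedy β t) n).take (n - i)) l = greedy β t l := fun l hl => by
    rw [wordSeq_take hl, wordSeq, getD_seqPrefix (by omega)]
  have hdropSeq : ∀ l < n - i, wordSeq ((seqPrefix (greedy β t) n).drop i) l =
      greedy β ((Tbeta β)^[i] t) l := fun l hl => by
    rw [wordSeq_drop, greedy_iterate, shiftN, shiftN, wordSeq, getD_seqPrefix (by omega)]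
  refine ⟨j, fun l hl => ?_, ?_⟩
  · rw [htake l (hl.trans hjn), hdropSeq l (hl.trans hjn), hpre l hl]
  · rwa [htake j hjn, hdropSeq j hjn]

lemma mem_Ico_lyndon_of_iterate_lt (hβ : 1 < β) (ht : 0 ≤ t)
    (hn : (Tbeta β)^[n] t < t) :
    t ∈ Ico (lyndonLeft β (seqPrefix (greedy β t) n))
      (lyndonRight β (seqPrefix (greedy β t) n)) := by
  have hn0 : n ≠ 0 := by
    rintro rfl
    exact lt_irrefl _ hn
  have hpow : 1 < β ^ n := one_lt_pow₀ hβ hn0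
  have hleft : lyndonLeft β (seqPrefix (greedy β t) n) =
      ∑ i ∈ Finset.range n, (greedy β t i : ℝ) / β ^ (i + 1) := by
    rw [lyndonLeft, length_seqPrefix]
    exact Finset.sum_congr rfl fun i hi => by rw [getD_seqPrefix (Finset.mem_range.1 hi)]
  have hexp : t = lyndonLeft β (seqPrefix (greedy β t) n) + (Tbeta β)^[n] t / β ^ n := by
    rw [hleft]
    exact eq_sum_greedy_add (zero_lt_one.trans hβ) ht n
  have hscaled : β ^ n * t = β ^ n * lyndonLeft β (seqPrefix (greedy β t) n) +
      (Tbeta β)^[n] t := by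
    conv_lhs => rw [hexp]
    rw [mul_add, mul_div_cancel₀ _ (by positivity)]
  constructor
  · linarith [div_nonneg (iterate_Tbeta_nonneg (β := β) ht n) (zero_le_one.trans hpow.le)]
  · rw [lyndonRight, length_seqPrefix, div_mul_eq_mul_div, lt_div_iff₀ (sub_pos.2 hpow)]
    linarith

lemma greedy_zero_eq_zero (hβ : 0 < β) (ht : 0 ≤ t) (h : t < 1 / β) :
    greedy β t 0 = 0 := by
  obtain ⟨i, hi, hi0⟩ := exists_greedy_eq_zero (n := 1) hβ ht (by simpa using h)
  rwa [Nat.lt_one_iff.1 hi] at hi0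

lemma runsLE_greedy (hβ : 0 < β) (hsum : ∑ i ∈ Finset.range (m + 1), 1 / β ^ (i + 1) = 1)
    (ht : t ∈ Ico (0 : ℝ) 1) : RunsLE m (greedy β t) := by
  intro k
  obtain ⟨i, hi, hi0⟩ := exists_greedy_eq_zero hβ (iterate_Tbeta_nonneg ht.1 k)
    ((iterate_Tbeta_lt_one ht.2 k).trans_eq hsum.symm)
  exact ⟨i, Nat.le_of_lt_succ hi, by rwa [← greedy_iterate]⟩

lemma exists_greedy_succ_eq_zero (hβ : 0 < β)
    (hsum : ∑ i ∈ Finset.range (m + 1), 1 / β ^ (i + 1) = 1) (ht0 : 0 ≤ t) (ht : t < 1 - 1 / β) :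
    ∃ i < m, greedy β t (i + 1) = 0 := by
  refine exists_greedy_eq_zero hβ (x := Tbeta β t) (Int.fract_nonneg _) ?_
  calc Tbeta β t ≤ β * t := by
        linarith [greedy_zero_add_Tbeta hβ.le ht0, (greedy β t 0).cast_nonneg (α := ℝ)]
    _ < β * (1 - 1 / β) := mul_lt_mul_of_pos_left ht hβ
    _ = β - 1 := by rw [mul_sub, mul_one, mul_one_div_cancel hβ.ne']
    _ = ∑ i ∈ Finset.range m, 1 / β ^ (i + 1) :=
        (sum_range_one_div_pow_eq_sub_one hβ.ne' hsum).symm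

lemma shiftN_perSeq_greedy_seqLt (hβ : 0 < β) (hβ2 : β < 2)
    (hsum : ∑ i ∈ Finset.range (m + 1), 1 / β ^ (i + 1) = 1)
    (ht : t ∈ Ico (0 : ℝ) (1 - 1 / β)) (hn : 0 < n) (k : ℕ) :
    seqLt (shiftN k (perSeq (seqPrefix (greedy β t) n))) (onesZero m) := by
  have hhalf : 1 / 2 < 1 / β := one_div_lt_one_div_of_lt hβ hβ2
  have ht1 : t ∈ Ico (0 : ℝ) 1 := ⟨ht.1, by linarith [ht.2]⟩
  have h0 : greedy β t 0 = 0 := greedy_zero_eq_zero hβ ht.1 (by linarith [ht.2])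
  have hper : Function.Periodic (perSeq (seqPrefix (greedy β t) n)) n := by
    simpa using periodic_perSeq (seqPrefix (greedy β t) n)
  have happly := perSeq_seqPrefix (x := greedy β t) hn
  refine ((runsLE_greedy hβ hsum ht1).perSeq_prefix h0 hn).seqLt_onesZero_of_periodic
    (fun i => ?_) hper hn ?_ ?_ k
  · rw [happly]
    exact greedy_le_one hβ hβ2.le ht1.2 _
  · rw [happly, Nat.zero_mod, h0]
  · obtain ⟨i, him, hi⟩ := exists_greedy_succ_eq_zero hβ hsum ht.1 ht.2
    rcases lt_or_ge (i + 1) n with hlt | hge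
    · exact ⟨i, him, by rwa [happly, Nat.mod_eq_of_lt hlt]⟩
    · exact ⟨n - 1, by omega, by rw [happly, Nat.sub_add_cancel hn, Nat.mod_self, h0]⟩

lemma isBetaLyndon_seqPrefix_of_first_drop (hβ : 0 < β) (hβ2 : β < 2)
    (hδ : IsQuasiGreedy β (onesZero m)) (ht : t ∈ Ico (0 : ℝ) (1 - 1 / β))
    (hn : (Tbeta β)^[n] t < t) (hmin : ∀ k < n, t ≤ (Tbeta β)^[k] t) :
    IsBetaLyndon β (seqPrefix (greedy β t) n) := by
  have ht1 : t < 1 := ht.2.trans (sub_lt_self 1 (one_div_pos.2 hβ))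
  have hn0 : 0 < n := by
    refine Nat.pos_of_ne_zero ?_
    rintro rfl
    exact lt_irrefl _ hn
  have hsum := sum_one_div_pow_eq_one_of_tsum_onesZero hδ.2.2.1
  refine ⟨?_, ?_, ?_, fun d hd k => ?_⟩
  · exact List.ne_nil_of_length_pos (by rwa [length_seqPrefix])
  · intro a ha
    obtain ⟨i, -, rfl⟩ := List.mem_map.1 ha
    exact greedy_le_one hβ hβ2.le ht1 i
  · rw [length_seqPrefix]
    exact fun i => seqLt_take_drop_of_first_drop hβ.le ht.1 hn hmin
  · have hle : seqLe (onesZero m) d := hd.2.2.2 _ hδ.1 hδ.2.1 hδ.2.2.1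
    exact seqLt_iff_toLex_lt.2 <|
      (seqLt_iff_toLex_lt.1 (shiftN_perSeq_greedy_seqLt hβ hβ2 hsum ht hn0 k)).trans_le
        (seqLe_iff_toLex_le.1 hle)

end FirstDrop

lemma mem_Eset_of_mem_Kset {β t : ℝ} (h : t ∈ Kset β t) : t ∈ Eset β :=
  ⟨h.1, fun t' htt' _ heq => htt'.not_ge ((heq ▸ h : t ∈ Kset β t').2 0)⟩

/-- Let `β ∈ (1,2)` with `δ(β) = (1^m 0)^∞` for some `m ≥ 1`. Then
`[0, 1 - 1/β) \ ⋃ [t_L, t_R) ⊆ E_β`, the union over all β-Lyndon intervals. -/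
theorem stmt_8 (β : ℝ) (hβ : β ∈ Set.Ioo (1 : ℝ) 2) (m : ℕ) (hm : 1 ≤ m)
    (hδ : IsQuasiGreedy β (perSeq (List.replicate m 1 ++ [0]))) :
    Set.Ico (0 : ℝ) (1 - 1 / β) \ lyndonUnionIco β ⊆ Eset β := by
  rintro t ⟨ht, hunion⟩
  have hβ0 : 0 < β := zero_lt_one.trans hβ.1
  have ht1 : t < 1 := ht.2.trans (sub_lt_self 1 (one_div_pos.2 hβ0))
  refine mem_Eset_of_mem_Kset ⟨⟨ht.1, ht1⟩, ?_⟩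
  by_contra! hdrop
  classical
  have hn : (Tbeta β)^[Nat.find hdrop] t < t := Nat.find_spec hdrop
  have hmin : ∀ k < Nat.find hdrop, t ≤ (Tbeta β)^[k] t := fun k hk =>
    not_lt.1 (Nat.find_min hdrop hk)
  exact hunion (mem_biUnion (isBetaLyndon_seqPrefix_of_first_drop hβ0 hβ.2 hδ ht hn hmin)
    (mem_Ico_lyndon_of_iterate_lt hβ.1 ht.1 hn))
end

section
/- Let β ∈ (1,2) be a multinacci number. Then for t ∈ [0,1), dim_H K_β(t) > 0 if and only if t < 1 − 1/β. -/
open Set Filter MeasureTheory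

/-!
A multinacci `β` satisfies `(2 - β) β ^ (m + 1) = 1`, so that `φ x = 1 - (2 - β) (1 - x)` is the
inverse branch of `T_β ^ (m + 1)` with digit block `1^m 0`, and `T_β ^ m (φ x) = x / β`.

If `1 - 1 / β ≤ t`, a survivor in `[β - 1, 1)` is `φ x` for some `x`, and `t ≤ x / β` puts `x` in
`[β - 1, 1)` again, so `T_β ^ (m + 1)` would push the survivors there away from `1` forever. Hence
no survivor has digit `0`, since it would be mapped into `[β - 1, 1)`. Then the survivors would be
pushed away from the fixed point `1 / (β - 1)` of `x ↦ βx - 1` forever, so there are none.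

If `t < 1 - 1 / β`, the orbit segments from `T_β (φ^(k+1) x)` to `x` stay above `t` as soon as
`β t ≤ x`. For large `k`, two consecutive maps `x ↦ T_β (φ^(k+1) x)` are contractions of an interval
`[s, β - 1]` with `β t ≤ s` and with separated images, so they generate a self-similar set of
survivors, whose dimension is positive.
-/

open scoped ENNReal NNReal

section OrbitSegments

variable {α : Type*} {f : α → α} {s A : Set α} {x y : α}

/-- The step relation of `f` restricted to source points in `s`. Its transitive closure relates
`x` to `y` when `y` is reached from `x` in a positive number of steps with all points before `y`
lying in `s`. -/
def StepWithin (f : α → α) (s : Set α) (x y : α) : Prop := x ∈ s ∧ f x = y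

lemma transGen_stepWithin_iterate {m n : ℕ} (hmn : m < n) (hx : ∀ i < n, f^[i] x ∈ s) :
    Relation.TransGen (StepWithin f s) (f^[m] x) (f^[n] x) :=
  (transGen_of_succ_of_lt (fun i j => StepWithin f s (f^[i] x) (f^[j] x))
    (fun i hi => ⟨hx i hi.2, (Function.iterate_succ_apply' f i x).symm⟩) hmn).lift
    (fun i => f^[i] x) fun _ _ h => h

-- The points from which `A` can be reached within `s` form a forward invariant subset of `s`.
lemma iterate_mem_of_forall_transGen (hA : ∀ x ∈ A, ∃ y ∈ A, Relation.TransGen (StepWithin f s) x y)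
    (hx : x ∈ A) (n : ℕ) : f^[n] x ∈ s := by
  let B : Set α := {x | ∃ y ∈ A, Relation.ReflTransGen (StepWithin f s) x y}
  have step : ∀ x ∈ B, x ∈ s ∧ f x ∈ B := by
    rintro x ⟨y, hy, hxy⟩
    obtain ⟨z, hz, hyz⟩ := hA y hy
    obtain ⟨x', ⟨hxs, rfl⟩, hx'z⟩ := Relation.TransGen.head'_iff.1 (hyz.trans_right hxy)
    exact ⟨hxs, z, hz, hx'z⟩
  have hB : MapsTo f B B := fun x hx => (step x hx).2
  exact (step _ (hB.iterate n ⟨x, hx, .refl⟩)).1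

end OrbitSegments

lemma dist_eq_mul_dist_of_sub_eq {c x y x' y' : ℝ} (hc : 0 ≤ c) (h : x' - y' = c * (x - y)) :
    dist x' y' = c * dist x y := by
  rw [Real.dist_eq, Real.dist_eq, h, abs_mul, abs_of_nonneg hc]

lemma eq_empty_of_mapsTo_of_expanding {X : Type*} [MetricSpace X] {S : Set X} {f : X → X} {p : X}
    {k : ℝ} (hS : Bornology.IsBounded S) (hf : MapsTo f S S) (hp : p ∉ S) (hk : 1 < k)
    (hexp : ∀ x ∈ S, k * dist x p ≤ dist (f x) p) : S = ∅ := by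
  refine eq_empty_of_forall_notMem fun x hx => ?_
  have iterate_le (n : ℕ) : k ^ n * dist x p ≤ dist (f^[n] x) p := by
    induction n with
    | zero => simp
    | succ n ih =>
      rw [Function.iterate_succ_apply', pow_succ', mul_assoc]
      exact (mul_le_mul_of_nonneg_left ih (by linarith)).trans (hexp _ (hf.iterate n hx))
  obtain ⟨C, hC⟩ := hS.subset_closedBall p
  have hpos : 0 < dist x p := dist_pos.2 fun h => hp (h ▸ hx)
  obtain ⟨n, hn⟩ := pow_unbounded_of_one_lt (C / dist x p) hk
  rw [div_lt_iff₀ hpos] at hn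
  exact (hn.trans_le (iterate_le n)).not_ge (hC (hf.iterate n hx))

section HausdorffDimension

lemma dimH_range_le_of_edist_le_rpow {α X Y : Type*} [EMetricSpace X] [EMetricSpace Y]
    {g : α → Y} {h : α → X} {C r : ℝ≥0} (hr : 0 < r)
    (hgh : ∀ a b, edist (g a) (g b) ≤ C * edist (h a) (h b) ^ (r : ℝ)) :
    dimH (range g) ≤ dimH (range h) / r := by
  cases isEmpty_or_nonempty α with
  | inl _ => simp only [range_eq_empty, dimH_empty, zero_le]
  | inr hα =>
    have hfactors : g.FactorsThrough h := fun a b hab => by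
      simpa [hab, ENNReal.zero_rpow_of_pos, hr] using hgh a b
    let f : X → Y := Function.extend h g fun _ => g hα.some
    have hf (a : α) : f (h a) = g a := hfactors.extend_apply _ a
    have hfr : f '' range h = range g := by
      rw [← range_comp]
      exact congrArg range (funext hf)
    rw [← hfr]
    refine HolderOnWith.dimH_image_le (C := C) ?_ hr
    rintro _ ⟨a, rfl⟩ _ ⟨b, rfl⟩
    simpa only [hf] using hgh a b

variable {X : Type*} [MetricSpace X] {b : ℕ} {h : (ℕ → Fin b) → X} {ρ δ : ℝ}

lemma abs_ofDigits_sub_le_mul_dist_rpow (hb : 1 < b) (hρ : 0 < ρ) (hρ₁ : ρ < 1) (hδ : 0 < δ)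
    (hsep : ∀ w v, w ≠ v → ρ ^ PiNat.firstDiff w v * δ ≤ dist (h w) (h v)) (w v : ℕ → Fin b) :
    |Real.ofDigits w - Real.ofDigits v| ≤
      (δ ^ Real.logb ρ⁻¹ b)⁻¹ * dist (h w) (h v) ^ Real.logb ρ⁻¹ b := by
  have hρ_inv : 1 < ρ⁻¹ := (one_lt_inv₀ hρ).2 hρ₁
  have hb' : (1 : ℝ) < b := by exact_mod_cast hb
  set r := Real.logb ρ⁻¹ b with hr
  have hr0 : 0 < r := Real.logb_pos hρ_inv hb'
  have hρr : ρ ^ r = (b : ℝ)⁻¹ := by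
    rw [← inv_inv ρ, Real.inv_rpow (by positivity), hr,
      Real.rpow_logb (by positivity) hρ_inv.ne' (by positivity)]
  rcases eq_or_ne w v with rfl | hne
  · simp [hr0.ne']
  set n := PiNat.firstDiff w v
  calc |Real.ofDigits w - Real.ofDigits v|
      ≤ ((b : ℝ) ^ n)⁻¹ :=
        Real.abs_ofDigits_sub_ofDigits_le fun i hi => PiNat.apply_eq_of_lt_firstDiff hi
    _ = (δ ^ r)⁻¹ * (ρ ^ n * δ) ^ r := by
        rw [Real.mul_rpow (by positivity) hδ.le, ← Real.rpow_pow_comm hρ.le, hρr, inv_pow]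
        field_simp
    _ ≤ (δ ^ r)⁻¹ * dist (h w) (h v) ^ r := by
        gcongr
        exact hsep w v hne

theorem logb_le_dimH_range_of_separated (hb : 1 < b) (hρ : 0 < ρ) (hρ₁ : ρ < 1) (hδ : 0 < δ)
    (hsep : ∀ w v, w ≠ v → ρ ^ PiNat.firstDiff w v * δ ≤ dist (h w) (h v)) :
    ENNReal.ofReal (Real.logb ρ⁻¹ b) ≤ dimH (range h) := by
  have hr : 0 < Real.logb ρ⁻¹ b :=
    Real.logb_pos ((one_lt_inv₀ hρ).2 hρ₁) (by exact_mod_cast hb)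
  let r : ℝ≥0 := (Real.logb ρ⁻¹ b).toNNReal
  let C : ℝ≥0 := ((δ ^ Real.logb ρ⁻¹ b)⁻¹).toNNReal
  have hholder (w v : ℕ → Fin b) :
      edist (Real.ofDigits w) (Real.ofDigits v) ≤ C * edist (h w) (h v) ^ (r : ℝ) := by
    rw [edist_nndist, edist_nndist, ← ENNReal.coe_rpow_of_nonneg _ r.coe_nonneg, ← ENNReal.coe_mul,
      ENNReal.coe_le_coe, ← NNReal.coe_le_coe, NNReal.coe_mul, NNReal.coe_rpow,
      Real.coe_toNNReal _ hr.le, Real.coe_toNNReal _ (by positivity)]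
    exact abs_ofDigits_sub_le_mul_dist_rpow hb hρ hρ₁ hδ hsep w v
  have hunit : 1 ≤ dimH (range (Real.ofDigits (b := b))) := by
    have hIcc : dimH (Icc (0 : ℝ) 1) = 1 := by
      rw [Real.dimH_of_nonempty_interior (by simp), Module.finrank_self, Nat.cast_one]
    rw [← hIcc, ← image_univ]
    exact dimH_mono (Real.ofDigits_SurjOn hb)
  have hr' : 0 < r := Real.toNNReal_pos.2 hr
  have hdiv : 1 ≤ dimH (range h) / r := hunit.trans (dimH_range_le_of_edist_le_rpow hr' hholder)
  rwa [ENNReal.le_div_iff_mul_le (.inl (ENNReal.coe_ne_zero.2 hr'.ne')) (.inl ENNReal.coe_ne_top),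
    one_mul] at hdiv

end HausdorffDimension

section IteratedFunctionSystem

variable {ι X : Type*} {S : Set X} {f : ι → X → X}

/-- The point `f (w 0) (f (w 1) (⋯ (f (w (n - 1)) x₀)))`, the `n`-th approximation to the point of
the attractor of the iterated function system `f` with address `w`. -/
def addressApprox (f : ι → X → X) (x₀ : X) : ℕ → (ℕ → ι) → X
  | 0, _ => x₀
  | n + 1, w => f (w 0) (addressApprox f x₀ n fun i => w (i + 1))

lemma addressApprox_mem (hmaps : ∀ i, MapsTo (f i) S S) {x₀ : X} (hx₀ : x₀ ∈ S) (n : ℕ)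
    (w : ℕ → ι) : addressApprox f x₀ n w ∈ S := by
  induction n generalizing w with
  | zero => exact hx₀
  | succ n ih => exact hmaps _ (ih _)

variable [MetricSpace X]

lemma dist_addressApprox_succ_le (hmaps : ∀ i, MapsTo (f i) S S) {k : ℝ≥0}
    (hf : ∀ i, LipschitzOnWith k (f i) S) {x₀ : X} (hx₀ : x₀ ∈ S) {C : ℝ}
    (hC : ∀ i, dist x₀ (f i x₀) ≤ C) (n : ℕ) (w : ℕ → ι) :
    dist (addressApprox f x₀ n w) (addressApprox f x₀ (n + 1) w) ≤ C * k ^ n := by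
  induction n generalizing w with
  | zero => simpa [addressApprox] using hC (w 0)
  | succ n ih =>
    rw [pow_succ', mul_left_comm]
    exact ((hf _).dist_le_mul _ (addressApprox_mem hmaps hx₀ _ _) _
      (addressApprox_mem hmaps hx₀ _ _)).trans (mul_le_mul_of_nonneg_left (ih _) k.2)

theorem exists_addressMap_of_contracting [Finite ι] (hS : IsComplete S) (hne : S.Nonempty)
    (hmaps : ∀ i, MapsTo (f i) S S) {k : ℝ≥0} (hk : k < 1)
    (hf : ∀ i, LipschitzOnWith k (f i) S) :
    ∃ h : (ℕ → ι) → X, (∀ w, h w ∈ S) ∧ ∀ w, h w = f (w 0) (h fun i => w (i + 1)) := by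
  obtain ⟨x₀, hx₀⟩ := hne
  obtain ⟨C, hC⟩ := (finite_range fun i => dist x₀ (f i x₀)).bddAbove
  have hmem := addressApprox_mem hmaps hx₀
  have hcauchy (w : ℕ → ι) : CauchySeq fun n => addressApprox f x₀ n w :=
    cauchySeq_of_le_geometric k C hk fun n =>
      dist_addressApprox_succ_le hmaps hf hx₀ (fun i => hC (mem_range_self i)) n w
  choose h hhS hlim using fun w =>
    cauchySeq_tendsto_of_isComplete hS (fun n => hmem n w) (hcauchy w)
  refine ⟨h, hhS, fun w => tendsto_nhds_unique ((tendsto_add_atTop_iff_nat 1).2 (hlim w)) ?_⟩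
  exact ((hf (w 0)).continuousOn _ (hhS _)).tendsto.comp
    (tendsto_nhdsWithin_iff.2 ⟨hlim _, .of_forall fun n => hmem n _⟩)

lemma mul_pow_le_dist_addressMap {h : (ℕ → ι) → X} (hhS : ∀ w, h w ∈ S)
    (hh : ∀ w, h w = f (w 0) (h fun i => w (i + 1))) {ρ δ : ℝ} (hρ : 0 ≤ ρ)
    (hexp : ∀ i, ∀ x ∈ S, ∀ y ∈ S, ρ * dist x y ≤ dist (f i x) (f i y))
    (hsep : Pairwise fun i j => ∀ x ∈ S, ∀ y ∈ S, δ ≤ dist (f i x) (f j y)) {n : ℕ}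
    {w v : ℕ → ι} (heq : ∀ i < n, w i = v i) (hdiff : w n ≠ v n) :
    ρ ^ n * δ ≤ dist (h w) (h v) := by
  induction n generalizing w v with
  | zero =>
    rw [pow_zero, one_mul, hh w, hh v]
    exact hsep hdiff _ (hhS _) _ (hhS _)
  | succ n ih =>
    rw [pow_succ', mul_assoc, hh w, hh v, heq 0 n.succ_pos]
    exact (mul_le_mul_of_nonneg_left (ih (fun i hi => heq _ (Nat.succ_lt_succ hi)) hdiff) hρ).trans
      (hexp _ _ (hhS _) _ (hhS _))

theorem exists_subset_iUnion_image_logb_le_dimH {b : ℕ} (hb : 1 < b) {f : Fin b → X → X}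
    (hS : IsComplete S) (hne : S.Nonempty) (hmaps : ∀ i, MapsTo (f i) S S) {k : ℝ≥0} (hk : k < 1)
    (hf : ∀ i, LipschitzOnWith k (f i) S) {ρ δ : ℝ} (hρ : 0 < ρ) (hρ₁ : ρ < 1) (hδ : 0 < δ)
    (hexp : ∀ i, ∀ x ∈ S, ∀ y ∈ S, ρ * dist x y ≤ dist (f i x) (f i y))
    (hsep : Pairwise fun i j => ∀ x ∈ S, ∀ y ∈ S, δ ≤ dist (f i x) (f j y)) :
    ∃ A ⊆ S, A ⊆ ⋃ i, f i '' A ∧ ENNReal.ofReal (Real.logb ρ⁻¹ b) ≤ dimH A := by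
  obtain ⟨h, hhS, hh⟩ := exists_addressMap_of_contracting hS hne hmaps hk hf
  refine ⟨range h, range_subset_iff.2 hhS, range_subset_iff.2 fun w => ?_,
    logb_le_dimH_range_of_separated hb hρ hρ₁ hδ fun w v hwv => ?_⟩
  · exact mem_iUnion.2 ⟨w 0, _, mem_range_self _, (hh w).symm⟩
  · exact mul_pow_le_dist_addressMap hhS hh hρ.le hexp hsep
      (fun i hi => PiNat.apply_eq_of_lt_firstDiff hi) (PiNat.apply_firstDiff_ne hwv)

end IteratedFunctionSystem

section BetaTransformation

variable {β t x : ℝ}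

lemma Tbeta_mem_Ico (β x : ℝ) : Tbeta β x ∈ Ico (0 : ℝ) 1 :=
  ⟨Int.fract_nonneg _, Int.fract_lt_one _⟩

lemma Tbeta_of_lt_one (hx₀ : 0 ≤ β * x) (hx₁ : β * x < 1) : Tbeta β x = β * x :=
  Int.fract_eq_self.2 ⟨hx₀, hx₁⟩

lemma Tbeta_of_one_le (hx₁ : 1 ≤ β * x) (hx₂ : β * x < 2) : Tbeta β x = β * x - 1 :=
  Int.fract_eq_iff.2 ⟨by linarith, by linarith, 1, by push_cast; ring⟩

lemma mapsTo_Tbeta_Kset (β t : ℝ) : MapsTo (Tbeta β) (Kset β t) (Kset β t) :=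
  fun x hx => ⟨Tbeta_mem_Ico β x, fun n => hx.2 (n + 1)⟩

-- `(β - 1)⁻¹` is the fixed point of the branch `x ↦ βx - 1`.
lemma iterate_Tbeta_of_nonneg (hβ₁ : 1 < β) (hβ₂ : β < 2) (hx : x < 1) {n : ℕ}
    (hn : 0 ≤ (β - 1)⁻¹ - β ^ n * ((β - 1)⁻¹ - x)) {j : ℕ} (hj : j ≤ n) :
    (Tbeta β)^[j] x = (β - 1)⁻¹ - β ^ j * ((β - 1)⁻¹ - x) := by
  set p := (β - 1)⁻¹
  have hp : β * p = p + 1 := by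
    linear_combination mul_inv_cancel₀ (sub_pos.2 hβ₁).ne'
  have hxp : 0 ≤ p - x := by nlinarith
  have antitone_orbit {i k : ℕ} (hik : i ≤ k) : p - β ^ k * (p - x) ≤ p - β ^ i * (p - x) := by
    gcongr
    exact hβ₁.le
  induction j with
  | zero => simp
  | succ j ih =>
    have hsucc : β * (p - β ^ j * (p - x)) - 1 = p - β ^ (j + 1) * (p - x) := by
      rw [pow_succ']
      linear_combination hp
    have hnonneg := hn.trans (antitone_orbit hj)
    have hle : p - β ^ j * (p - x) ≤ x := by simpa using antitone_orbit j.zero_le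
    rw [Function.iterate_succ_apply', ih (by omega), ← hsucc]
    exact Tbeta_of_one_le (by linarith) (by nlinarith)

end BetaTransformation

lemma IsMultinacci.exists_two_sub_mul_pow_eq_one {β : ℝ} (hβ : IsMultinacci β) :
    ∃ m : ℕ, (2 - β) * β ^ (m + 1) = 1 := by
  obtain ⟨m, -, hm⟩ := hβ
  have hgeom := geom_sum_mul β (m + 1)
  rw [← hm] at hgeom
  exact ⟨m, by linarith⟩

/-- The inverse branch `x ↦ 1 - (2 - β) (1 - x)` of `T_β ^ (m + 1)` with digit block `1^m 0`, where
`(2 - β) β ^ (m + 1) = 1`. Its fixed point is `1`. -/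
def blockBranch (β x : ℝ) : ℝ := 1 - (2 - β) * (1 - x)

/-- The inverse branch `x ↦ T_β (φ^(k+1) x)` of `T_β ^ ((k + 1) (m + 1) - 1)` with digit block
`1^(m-1) 0 (1^m 0)^k`, where `φ = blockBranch β`. -/
def returnBranch (β : ℝ) (k : ℕ) (x : ℝ) : ℝ := β - 1 - β * (2 - β) ^ (k + 1) * (1 - x)

lemma iterate_blockBranch (β : ℝ) (k : ℕ) (x : ℝ) :
    (blockBranch β)^[k] x = 1 - (2 - β) ^ k * (1 - x) := by
  induction k with
  | zero => simp
  | succ k ih =>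
    rw [Function.iterate_succ_apply', ih, blockBranch]
    ring

lemma mapsTo_blockBranch {β : ℝ} (hβ₁ : 1 < β) (hβ₂ : β < 2) (s : ℝ) :
    MapsTo (blockBranch β) (Ico s 1) (Ico s 1) := by
  rintro x ⟨hsx, hx₁⟩
  unfold blockBranch
  constructor <;> nlinarith

section ReturnBranch

variable {β s x y : ℝ} {k : ℕ}

lemma dist_returnBranch (hβ₁ : 1 < β) (hβ₂ : β < 2) (k : ℕ) (x y : ℝ) :
    dist (returnBranch β k x) (returnBranch β k y) = β * (2 - β) ^ (k + 1) * dist x y := by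
  refine dist_eq_mul_dist_of_sub_eq (mul_nonneg (by linarith) (pow_nonneg (by linarith) _)) ?_
  unfold returnBranch
  ring

lemma mapsTo_returnBranch (hβ₁ : 1 < β) (hβ₂ : β < 2) (hs : 0 ≤ s)
    (hk : β * (2 - β) ^ (k + 1) ≤ β - 1 - s) :
    MapsTo (returnBranch β k) (Icc s (β - 1)) (Icc s (β - 1)) := by
  rintro x ⟨hsx, hx⟩
  have hratio : 0 ≤ β * (2 - β) ^ (k + 1) :=
    mul_nonneg (by linarith) (pow_nonneg (by linarith) _)
  unfold returnBranch
  constructor <;> nlinarith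

lemma mul_le_returnBranch_succ_sub (hβ₁ : 1 < β) (hβ₂ : β < 2) (hx : s ≤ x) (hy : y ≤ β - 1)
    (k : ℕ) : β * (2 - β) ^ (k + 2) * s ≤ returnBranch β (k + 1) x - returnBranch β k y := by
  have hq : 0 ≤ 2 - β := by linarith
  have hgap : 0 ≤ β * (2 - β) ^ (k + 1) * ((β - 1 - y) + (2 - β) * (x - s)) :=
    mul_nonneg (by positivity)
      (add_nonneg (by linarith) (mul_nonneg hq (by linarith)))
  unfold returnBranch
  linear_combination hgap

lemma pairwise_le_dist_returnBranch (hβ₁ : 1 < β) (hβ₂ : β < 2) (k : ℕ) :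
    Pairwise fun i j : Fin 2 => ∀ x ∈ Icc s (β - 1), ∀ y ∈ Icc s (β - 1),
      β * (2 - β) ^ (k + 2) * s ≤ dist (returnBranch β (k + i) x) (returnBranch β (k + j) y) := by
  have hgap {x y : ℝ} (hx : x ∈ Icc s (β - 1)) (hy : y ∈ Icc s (β - 1)) :
      β * (2 - β) ^ (k + 2) * s ≤ dist (returnBranch β (k + 1) x) (returnBranch β k y) :=
    (mul_le_returnBranch_succ_sub hβ₁ hβ₂ hx.1 hy.2 k).trans (le_abs_self _)
  intro i j hij x hx y hy
  fin_cases i <;> fin_cases j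
  · exact absurd rfl hij
  · exact (hgap hy hx).trans_eq (dist_comm _ _)
  · exact hgap hx hy
  · exact absurd rfl hij

lemma exists_forall_mul_pow_le (hβ₁ : 1 < β) (hβ₂ : β < 2) (hs : s < β - 1) :
    ∃ N, ∀ k ≥ N, β * (2 - β) ^ (k + 1) ≤ β - 1 - s := by
  have hβ₀ : 0 < β := one_pos.trans hβ₁
  obtain ⟨N, hN⟩ := exists_pow_lt_of_lt_one (div_pos (sub_pos.2 hs) hβ₀)
    (show 2 - β < 1 by linarith)
  refine ⟨N, fun k hk => ?_⟩
  rw [← le_div_iff₀' hβ₀]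
  exact (pow_le_pow_of_le_one (by linarith) (by linarith) (by omega)).trans hN.le

theorem exists_subset_iUnion_returnBranch (hβ₁ : 1 < β) (hβ₂ : β < 2) (hs₀ : 0 < s)
    (hs : s < β - 1) :
    ∃ A ⊆ Icc s (β - 1), A ⊆ ⋃ k, returnBranch β k '' A ∧ 0 < dimH A := by
  obtain ⟨N, hN⟩ := exists_forall_mul_pow_le hβ₁ hβ₂ hs
  have hq : 0 < 2 - β := by linarith
  let f (i : Fin 2) : ℝ → ℝ := returnBranch β (N + i)
  have hcontr (i : Fin 2) : LipschitzOnWith (β - 1 - s).toNNReal (f i) (Icc s (β - 1)) := by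
    refine .of_dist_le_mul fun x _ y _ => ?_
    rw [dist_returnBranch hβ₁ hβ₂, Real.coe_toNNReal _ (by linarith)]
    exact mul_le_mul_of_nonneg_right (hN _ (by omega)) dist_nonneg
  have hexp (i : Fin 2) : ∀ x ∈ Icc s (β - 1), ∀ y ∈ Icc s (β - 1),
      β * (2 - β) ^ (N + 2) * dist x y ≤ dist (f i x) (f i y) := by
    intro x _ y _
    rw [dist_returnBranch hβ₁ hβ₂]
    gcongr ?_ * _
    exact mul_le_mul_of_nonneg_left
      (pow_le_pow_of_le_one hq.le (by linarith) (by omega)) (by linarith)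
  have hρ₁ : β * (2 - β) ^ (N + 2) < 1 := (hN (N + 1) N.le_succ).trans_lt (by linarith)
  obtain ⟨A, hAS, hA, hdim⟩ := exists_subset_iUnion_image_logb_le_dimH one_lt_two
    isClosed_Icc.isComplete (nonempty_Icc.2 hs.le)
    (fun i => mapsTo_returnBranch hβ₁ hβ₂ hs₀.le (hN _ (by omega)))
    (Real.toNNReal_lt_one.2 (by linarith)) hcontr (by positivity) hρ₁ (by positivity) hexp
    (pairwise_le_dist_returnBranch hβ₁ hβ₂ N)
  refine ⟨A, hAS, hA.trans (iUnion_subset fun i => subset_iUnion_of_subset (N + i) subset_rfl),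
    lt_of_lt_of_le (ENNReal.ofReal_pos.2 ?_) hdim⟩
  exact Real.logb_pos ((one_lt_inv₀ (by positivity)).2 hρ₁) (by norm_num)

end ReturnBranch

section Multinacci

variable {β t x : ℝ} {m : ℕ}

lemma lt_two_of_two_sub_mul_pow_eq_one (hβ : 1 < β) (hm : (2 - β) * β ^ (m + 1) = 1) : β < 2 :=
  sub_pos.1 (pos_of_mul_pos_left (hm ▸ one_pos) (by positivity))

lemma sub_pow_mul_sub_blockBranch (hβ : 1 < β) (hm : (2 - β) * β ^ (m + 1) = 1) (x : ℝ) :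
    (β - 1)⁻¹ - β ^ m * ((β - 1)⁻¹ - blockBranch β x) = x / β := by
  have hfix : (β - 1) * (β - 1)⁻¹ = 1 := mul_inv_cancel₀ (sub_pos.2 hβ).ne'
  have hfactor : (β - 1)⁻¹ - blockBranch β x = (2 - β) * ((β - 1)⁻¹ + 1 - x) := by
    unfold blockBranch
    linear_combination hfix
  rw [hfactor, eq_div_iff (by positivity)]
  linear_combination hfix - ((β - 1)⁻¹ + 1 - x) * hm

lemma ne_zero_of_two_sub_mul_pow_eq_one (hβ : 1 < β) (hm : (2 - β) * β ^ (m + 1) = 1) :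
    m ≠ 0 := by
  rintro rfl
  rw [zero_add, pow_one] at hm
  nlinarith

lemma iterate_Tbeta_blockBranch (hβ : 1 < β) (hm : (2 - β) * β ^ (m + 1) = 1) (hx : x ∈ Ico 0 1)
    {j : ℕ} (hj : j ≤ m) : (Tbeta β)^[j] (blockBranch β x) =
      (β - 1)⁻¹ - β ^ j * ((β - 1)⁻¹ - blockBranch β x) := by
  have hβ₂ := lt_two_of_two_sub_mul_pow_eq_one hβ hm
  refine iterate_Tbeta_of_nonneg hβ hβ₂ (mapsTo_blockBranch hβ hβ₂ 0 hx).2 ?_ hj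
  rw [sub_pow_mul_sub_blockBranch hβ hm]
  exact div_nonneg hx.1 (by linarith)

lemma iterate_Tbeta_blockBranch_eq_div (hβ : 1 < β) (hm : (2 - β) * β ^ (m + 1) = 1)
    (hx : x ∈ Ico 0 1) : (Tbeta β)^[m] (blockBranch β x) = x / β := by
  rw [iterate_Tbeta_blockBranch hβ hm hx le_rfl, sub_pow_mul_sub_blockBranch hβ hm]

lemma iterate_succ_Tbeta_blockBranch (hβ : 1 < β) (hm : (2 - β) * β ^ (m + 1) = 1)
    (hx : x ∈ Ico 0 1) : (Tbeta β)^[m + 1] (blockBranch β x) = x := by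
  have hdiv : β * (x / β) = x := mul_div_cancel₀ x (by positivity)
  rw [Function.iterate_succ_apply', iterate_Tbeta_blockBranch_eq_div hβ hm hx,
    Tbeta_of_lt_one (by linarith [hx.1]) (by linarith [hx.2]), hdiv]

lemma iterate_succ_Tbeta_blockBranch_of_lt (hβ : 1 < β) (hm : (2 - β) * β ^ (m + 1) = 1)
    (hx : x ∈ Ico 0 1) {j : ℕ} (hj : j < m) :
    (Tbeta β)^[j + 1] (blockBranch β x) = β * (Tbeta β)^[j] (blockBranch β x) - 1 := by
  rw [iterate_Tbeta_blockBranch hβ hm hx hj, iterate_Tbeta_blockBranch hβ hm hx hj.le, pow_succ']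
  linear_combination -mul_inv_cancel₀ (sub_pos.2 hβ).ne'

lemma le_iterate_Tbeta_blockBranch (hβ : 1 < β) (hm : (2 - β) * β ^ (m + 1) = 1)
    (hx : x ∈ Ico 0 1) (htx : β * t ≤ x) {j : ℕ} (hj : j ≤ m) :
    t ≤ (Tbeta β)^[j] (blockBranch β x) := by
  rcases hj.lt_or_eq with hj | rfl
  · have hnonneg : 0 ≤ (Tbeta β)^[j + 1] (blockBranch β x) := by
      rw [Function.iterate_succ_apply']
      exact (Tbeta_mem_Ico _ _).1
    rw [iterate_succ_Tbeta_blockBranch_of_lt hβ hm hx hj] at hnonneg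
    refine le_of_mul_le_mul_left ?_ (one_pos.trans hβ)
    linarith [hx.2]
  · rw [iterate_Tbeta_blockBranch_eq_div hβ hm hx, le_div_iff₀' (by positivity)]
    exact htx

section Emptiness

lemma Kset_inter_Ici_eq_empty (hβ : 1 < β) (hm : (2 - β) * β ^ (m + 1) = 1) (ht : 1 - 1 / β ≤ t) :
    Kset β t ∩ Ici (β - 1) = ∅ := by
  have hpow : 1 < β ^ (m + 1) := one_lt_pow₀ hβ m.succ_ne_zero
  have return_eq : ∀ y ∈ Kset β t ∩ Ici (β - 1),
      (Tbeta β)^[m + 1] y = 1 - β ^ (m + 1) * (1 - y) ∧ (Tbeta β)^[m + 1] y ∈ Ici (β - 1) := by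
    rintro y ⟨hy, hy₁ : β - 1 ≤ y⟩
    set x := 1 - β ^ (m + 1) * (1 - y)
    have hφ : blockBranch β x = y := by
      unfold blockBranch
      linear_combination (y - 1) * hm
    have hx : x ∈ Ico 0 1 := ⟨by nlinarith, by nlinarith [hy.1.2]⟩
    have hreturn := iterate_succ_Tbeta_blockBranch hβ hm hx
    have htx : 1 - 1 / β ≤ x / β := by
      rw [← iterate_Tbeta_blockBranch_eq_div hβ hm hx, hφ]
      exact ht.trans (hy.2 m)
    rw [hφ] at hreturn
    refine ⟨hreturn, ?_⟩
    rw [hreturn, mem_Ici]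
    field_simp at htx
    exact htx
  refine eq_empty_of_mapsTo_of_expanding (f := (Tbeta β)^[m + 1]) (p := 1)
    (Metric.isBounded_Ico 0 1 |>.subset fun y hy => hy.1.1)
    (fun y hy => ⟨(mapsTo_Tbeta_Kset β t).iterate _ hy.1, (return_eq y hy).2⟩)
    (fun h => h.1.1.2.false) hpow fun y hy => ?_
  refine (dist_eq_mul_dist_of_sub_eq (by positivity) ?_).ge
  rw [(return_eq y hy).1]
  ring

theorem Kset_eq_empty (hβ : 1 < β) (hm : (2 - β) * β ^ (m + 1) = 1) (ht : 1 - 1 / β ≤ t) :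
    Kset β t = ∅ := by
  have hβ₂ := lt_two_of_two_sub_mul_pow_eq_one hβ hm
  have one_le : ∀ x ∈ Kset β t, 1 ≤ β * x := by
    intro x hx
    by_contra! hlt
    have hTx : Tbeta β x = β * x := Tbeta_of_lt_one (by nlinarith [hx.1.1]) hlt
    have hge : β * x ∈ Ici (β - 1) := by
      have htx : 1 - 1 / β ≤ x := ht.trans (hx.2 0)
      field_simp at htx
      exact htx
    have hmem : β * x ∈ Kset β t ∩ Ici (β - 1) := ⟨hTx ▸ mapsTo_Tbeta_Kset β t hx, hge⟩
    rwa [Kset_inter_Ici_eq_empty hβ hm ht] at hmem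
  refine eq_empty_of_mapsTo_of_expanding (p := (β - 1)⁻¹)
    (Metric.isBounded_Ico 0 1 |>.subset fun x hx => hx.1) (mapsTo_Tbeta_Kset β t)
    (fun h => ((one_lt_inv₀ (by linarith)).2 (by linarith)).not_gt h.1.2) hβ fun x hx => ?_
  refine (dist_eq_mul_dist_of_sub_eq (by positivity) ?_).ge
  rw [Tbeta_of_one_le (one_le x hx) (by nlinarith [hx.1.1, hx.1.2])]
  linear_combination mul_inv_cancel₀ (sub_pos.2 hβ).ne'

end Emptiness

section PositiveDimension

lemma Tbeta_iterate_succ_blockBranch (hβ : 1 < β) (hm : (2 - β) * β ^ (m + 1) = 1)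
    (hx : x ∈ Ico 0 1) (k : ℕ) :
    Tbeta β ((blockBranch β)^[k + 1] x) = returnBranch β k x := by
  have hβ₂ := lt_two_of_two_sub_mul_pow_eq_one hβ hm
  have hmem := (mapsTo_blockBranch hβ hβ₂ 0).iterate k hx
  have hT := iterate_succ_Tbeta_blockBranch_of_lt hβ hm hmem
    (Nat.pos_of_ne_zero (ne_zero_of_two_sub_mul_pow_eq_one hβ hm))
  simp only [zero_add, Function.iterate_one, Function.iterate_zero, id_eq,
    ← Function.iterate_succ_apply'] at hT
  rw [hT, Nat.succ_eq_add_one, iterate_blockBranch, returnBranch]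
  ring

lemma transGen_iterate_Tbeta_blockBranch (hβ : 1 < β) (hm : (2 - β) * β ^ (m + 1) = 1)
    (hx : x ∈ Ico 0 1) (htx : β * t ≤ x) {j : ℕ} (hj : j ≤ m) :
    Relation.TransGen (StepWithin (Tbeta β) (Ici t)) ((Tbeta β)^[j] (blockBranch β x)) x := by
  have htrans := transGen_stepWithin_iterate (f := Tbeta β) (s := Ici t) (Nat.lt_succ_of_le hj)
    fun i hi => le_iterate_Tbeta_blockBranch hβ hm hx htx (Nat.le_of_lt_succ hi)
  rwa [iterate_succ_Tbeta_blockBranch hβ hm hx] at htrans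

lemma reflTransGen_iterate_blockBranch (hβ : 1 < β) (hm : (2 - β) * β ^ (m + 1) = 1)
    (hx : x ∈ Ico 0 1) (htx : β * t ≤ x) (k : ℕ) :
    Relation.ReflTransGen (StepWithin (Tbeta β) (Ici t)) ((blockBranch β)^[k] x) x := by
  have hβ₂ := lt_two_of_two_sub_mul_pow_eq_one hβ hm
  induction k with
  | zero => exact .refl
  | succ k ih =>
    have hmem (s : ℝ) (hs : x ∈ Ico s 1) := (mapsTo_blockBranch hβ hβ₂ s).iterate k hs
    rw [Function.iterate_succ_apply']
    exact (transGen_iterate_Tbeta_blockBranch hβ hm (hmem 0 hx) (hmem _ ⟨htx, hx.2⟩).1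
      m.zero_le).to_reflTransGen.trans ih

lemma transGen_returnBranch (hβ : 1 < β) (hm : (2 - β) * β ^ (m + 1) = 1)
    (hx : x ∈ Ico 0 1) (htx : β * t ≤ x) (k : ℕ) :
    Relation.TransGen (StepWithin (Tbeta β) (Ici t)) (returnBranch β k x) x := by
  have hβ₂ := lt_two_of_two_sub_mul_pow_eq_one hβ hm
  have hmem (s : ℝ) (hs : x ∈ Ico s 1) := (mapsTo_blockBranch hβ hβ₂ s).iterate k hs
  rw [← Tbeta_iterate_succ_blockBranch hβ hm hx, Function.iterate_succ_apply']
  exact (transGen_iterate_Tbeta_blockBranch hβ hm (hmem 0 hx) (hmem _ ⟨htx, hx.2⟩).1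
    (Nat.one_le_iff_ne_zero.2 (ne_zero_of_two_sub_mul_pow_eq_one hβ hm))).trans_left
    (reflTransGen_iterate_blockBranch hβ hm hx htx k)

lemma subset_Kset_of_subset_iUnion_returnBranch (hβ : 1 < β) (hm : (2 - β) * β ^ (m + 1) = 1)
    {A : Set ℝ} (hA₀ : A ⊆ Ico 0 1) (htA : ∀ x ∈ A, β * t ≤ x)
    (hA : A ⊆ ⋃ k, returnBranch β k '' A) : A ⊆ Kset β t := by
  refine fun x hx => ⟨hA₀ hx, iterate_mem_of_forall_transGen (s := Ici t) (fun y hy => ?_) hx⟩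
  obtain ⟨k, z, hz, rfl⟩ := mem_iUnion.1 (hA hy)
  exact ⟨z, hz, transGen_returnBranch hβ hm (hA₀ hz) (htA z hz) k⟩

theorem dimH_Kset_pos (hβ : 1 < β) (hm : (2 - β) * β ^ (m + 1) = 1) (ht : t < 1 - 1 / β) :
    0 < dimH (Kset β t) := by
  have hβ₂ := lt_two_of_two_sub_mul_pow_eq_one hβ hm
  have htβ : β * t < β - 1 := by
    field_simp at ht
    rwa [mul_comm]
  obtain ⟨s, hs, hsβ⟩ := exists_between (max_lt (sub_pos.2 hβ) htβ)
  obtain ⟨hs₀, hts⟩ := max_lt_iff.1 hs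
  obtain ⟨A, hAS, hA, hdim⟩ := exists_subset_iUnion_returnBranch hβ hβ₂ hs₀ hsβ
  refine hdim.trans_le (dimH_mono (subset_Kset_of_subset_iUnion_returnBranch hβ hm ?_ ?_ hA))
  · exact fun x hx => ⟨hs₀.le.trans (hAS hx).1, (hAS hx).2.trans_lt (by linarith)⟩
  · exact fun x hx => hts.le.trans (hAS hx).1

end PositiveDimension

end Multinacci

/-- For a multinacci `β ∈ (1,2)` and `t ∈ [0,1)`,
`dim_H K_β(t) > 0` if and only if `t < 1 - 1/β`. -/
theorem stmt_12 (β : ℝ) (hβ : β ∈ Set.Ioo (1 : ℝ) 2) (hmulti : IsMultinacci β) :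
    ∀ t ∈ Set.Ico (0 : ℝ) 1, (0 < dimH (Kset β t) ↔ t < 1 - 1 / β) := by
  intro t _
  obtain ⟨hβ₁, -⟩ := hβ
  obtain ⟨m, hm⟩ := hmulti.exists_two_sub_mul_pow_eq_one
  refine ⟨fun hdim => ?_, dimH_Kset_pos hβ₁ hm⟩
  by_contra! ht
  simp only [Kset_eq_empty hβ₁ hm ht, dimH_empty, lt_self_iff_false] at hdim
end
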